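/- In the monoid T, for all 1 ≤ i ≤ n−3 the relation σ_{i+2}·σ_{i+1}·θ_i·ϑ_{i+2}·ϑ_{i+3} = σ_i·σ_{i+1}·ϑ_i·θ_i·θ_{i+2}·ϑ_{i+2} holds. -/

import Mathlib

/-!
The presentation of the partial Brauer monoid `P𝔅_n` from Kudryavtseva–Mazorchuk,
Section 5.

Generators: `Sum.inl i` represents `σ_{i+1}` and `Sum.inr (Sum.inl i)` represents
`θ_{i+1}` for `i : Fin (n-1)`, while `Sum.inr (Sum.inr j)` represents `ϑ_{j+1}`
for `j : Fin n` (the paper's indices are `i.val + 1`, `j.val + 1`).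
-/

/-- Generator type: `σ_{i+1}`, `θ_{i+1}` (`i : Fin (n-1)`) and `ϑ_{j+1}` (`j : Fin n`). -/
abbrev PBGen (n : ℕ) := Fin (n - 1) ⊕ (Fin (n - 1) ⊕ Fin n)

/-- The word `σ_{i+1}` in the free monoid. -/
def fσ {n : ℕ} (i : Fin (n - 1)) : FreeMonoid (PBGen n) := FreeMonoid.of (Sum.inl i)

/-- The word `θ_{i+1}` in the free monoid. -/
def fθ {n : ℕ} (i : Fin (n - 1)) : FreeMonoid (PBGen n) := FreeMonoid.of (Sum.inr (Sum.inl i))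

/-- The word `ϑ_{j+1}` in the free monoid. -/
def fϑ {n : ℕ} (j : Fin n) : FreeMonoid (PBGen n) := FreeMonoid.of (Sum.inr (Sum.inr j))

/-- The point `i` of `{1, …, n}` (0-based: `i.val`). -/
def lo {n : ℕ} (i : Fin (n - 1)) : Fin n := ⟨i.1, by have := i.2; omega⟩

/-- The point `i + 1` of `{1, …, n}` (0-based: `i.val + 1`). -/
def hi {n : ℕ} (i : Fin (n - 1)) : Fin n := ⟨i.1 + 1, by have := i.2; omega⟩

/-- The defining relations of the presentation of the partial Brauer monoid `P𝔅_n`: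
the Brauer relations for `σ, θ`, the symmetric-inverse-monoid relations for `σ, ϑ`,
and the mixed relations for `θ, ϑ`. -/
inductive PBRel (n : ℕ) : FreeMonoid (PBGen n) → FreeMonoid (PBGen n) → Prop
  | sigma_sq (i) : PBRel n (fσ i * fσ i) 1
  | sigma_comm (i j) (h : 1 < Nat.dist i.1 j.1) : PBRel n (fσ i * fσ j) (fσ j * fσ i)
  | braid (i j) (h : Nat.dist i.1 j.1 = 1) :
      PBRel n (fσ i * fσ j * fσ i) (fσ j * fσ i * fσ j)
  | theta_idem (i) : PBRel n (fθ i * fθ i) (fθ i)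
  | theta_comm (i j) (h : 1 < Nat.dist i.1 j.1) : PBRel n (fθ i * fθ j) (fθ j * fθ i)
  | theta_theta_theta (i j) (h : Nat.dist i.1 j.1 = 1) : PBRel n (fθ i * fθ j * fθ i) (fθ i)
  | theta_sigma (i) : PBRel n (fθ i * fσ i) (fθ i)
  | sigma_theta (i) : PBRel n (fσ i * fθ i) (fθ i)
  | theta_sigma_comm (i j) (h : 1 < Nat.dist i.1 j.1) : PBRel n (fθ i * fσ j) (fσ j * fθ i)
  | sigma_theta_theta (i j) (h : Nat.dist i.1 j.1 = 1) :
      PBRel n (fσ i * fθ j * fθ i) (fσ j * fθ i)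
  | theta_theta_sigma (i j) (h : Nat.dist i.1 j.1 = 1) :
      PBRel n (fθ i * fθ j * fσ i) (fθ i * fσ j)
  | v_idem (j) : PBRel n (fϑ j * fϑ j) (fϑ j)
  | v_comm (j j') (h : j ≠ j') : PBRel n (fϑ j * fϑ j') (fϑ j' * fϑ j)
  | sigma_v (i) : PBRel n (fσ i * fϑ (lo i)) (fϑ (hi i) * fσ i)
  | sigma_v_comm (i j) (h : j ≠ lo i) (h' : j ≠ hi i) : PBRel n (fσ i * fϑ j) (fϑ j * fσ i)
  | v_sigma_v (i) : PBRel n (fϑ (lo i) * fσ i * fϑ (lo i)) (fϑ (lo i) * fϑ (hi i))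
  | theta_v_comm (i j) (h : j ≠ lo i) (h' : j ≠ hi i) : PBRel n (fθ i * fϑ j) (fϑ j * fθ i)
  | theta_v (i) : PBRel n (fθ i * fϑ (lo i)) (fθ i * fϑ (hi i))
  | theta_vv (i) : PBRel n (fθ i * fϑ (lo i)) (fθ i * fϑ (lo i) * fϑ (hi i))
  | v_theta (i) : PBRel n (fϑ (lo i) * fθ i) (fϑ (hi i) * fθ i)
  | vv_theta (i) : PBRel n (fϑ (lo i) * fθ i) (fϑ (lo i) * fϑ (hi i) * fθ i)
  | theta_v_theta (i) : PBRel n (fθ i * fϑ (lo i) * fθ i) (fθ i)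
  | v_theta_v (i) : PBRel n (fϑ (lo i) * fθ i * fϑ (lo i)) (fϑ (lo i) * fϑ (hi i))

/-- The monoid `T` given by the presentation above. -/
abbrev PBMonoid (n : ℕ) := PresentedMonoid (PBRel n)

/-- The generator `σ_{i+1}` of `T`. -/
def σP {n : ℕ} (i : Fin (n - 1)) : PBMonoid n := PresentedMonoid.of (PBRel n) (Sum.inl i)

/-- The generator `θ_{i+1}` of `T`. -/
def θP {n : ℕ} (i : Fin (n - 1)) : PBMonoid n :=
  PresentedMonoid.of (PBRel n) (Sum.inr (Sum.inl i))

/-- The generator `ϑ_{j+1}` of `T`. -/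
def ϑP {n : ℕ} (j : Fin n) : PBMonoid n := PresentedMonoid.of (PBRel n) (Sum.inr (Sum.inr j))

/-!
Multiplying `θ_i θ_{i+2}` on the left by `σ_{i+2} σ_{i+1}` or by `σ_i σ_{i+1}` gives the same
element: as diagrams, both connect `i` with `i + 3` and `i + 1` with `i + 2`. To create the factor
`θ_{i+2}`, write `ϑ_{i+2} ϑ_{i+3} = ϑ_{i+2} θ_{i+2} ϑ_{i+2}`. The first `ϑ_{i+2}` is carried to the
far left through `σ_{i+2} σ_{i+1}`, where it becomes `ϑ_{i+1}`; once `σ_{i+2} σ_{i+1}` is replaced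
by `σ_i σ_{i+1}`, carrying it back to the right turns it into `ϑ_i`.
-/

namespace PBMonoid

open PresentedMonoid (mk_eq_mk_of_rel)

variable {n : ℕ} {i j k : Fin (n - 1)} {p q : Fin n}

theorem σP_mul_self (i : Fin (n - 1)) : σP i * σP i = 1 :=
  mk_eq_mk_of_rel (PBRel.sigma_sq i)

theorem commute_σP_σP (h : 1 < Nat.dist i.1 j.1) : Commute (σP i) (σP j) :=
  mk_eq_mk_of_rel (PBRel.sigma_comm i j h)

theorem commute_θP_θP (h : 1 < Nat.dist i.1 j.1) : Commute (θP i) (θP j) :=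
  mk_eq_mk_of_rel (PBRel.theta_comm i j h)

theorem σP_mul_θP_mul_θP (h : Nat.dist i.1 j.1 = 1) : σP i * θP j * θP i = σP j * θP i :=
  mk_eq_mk_of_rel (PBRel.sigma_theta_theta i j h)

theorem commute_σP_ϑP (hlo : p.1 ≠ i.1) (hhi : p.1 ≠ i.1 + 1) : Commute (σP i) (ϑP p) :=
  mk_eq_mk_of_rel (PBRel.sigma_v_comm i p (Fin.ne_of_val_ne hlo) (Fin.ne_of_val_ne hhi))

theorem commute_θP_ϑP (hlo : p.1 ≠ i.1) (hhi : p.1 ≠ i.1 + 1) : Commute (θP i) (ϑP p) :=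
  mk_eq_mk_of_rel (PBRel.theta_v_comm i p (Fin.ne_of_val_ne hlo) (Fin.ne_of_val_ne hhi))

theorem ϑP_mul_θP_mul_ϑP (hp : p.1 = i.1) (hq : q.1 = i.1 + 1) :
    ϑP p * θP i * ϑP p = ϑP p * ϑP q := by
  obtain rfl : p = lo i := Fin.ext hp
  obtain rfl : q = hi i := Fin.ext hq
  exact mk_eq_mk_of_rel (PBRel.v_theta_v i)

theorem semiconjBy_σP_ϑP (hp : p.1 = i.1) (hq : q.1 = i.1 + 1) :
    SemiconjBy (σP i) (ϑP p) (ϑP q) := by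
  obtain rfl : p = lo i := Fin.ext hp
  obtain rfl : q = hi i := Fin.ext hq
  exact mk_eq_mk_of_rel (PBRel.sigma_v i)

theorem semiconjBy_σP_ϑP_symm (hp : p.1 = i.1) (hq : q.1 = i.1 + 1) :
    SemiconjBy (σP i) (ϑP q) (ϑP p) :=
  let σUnit : (PBMonoid n)ˣ := ⟨σP i, σP i, σP_mul_self i, σP_mul_self i⟩
  SemiconjBy.units_inv_symm_left (a := σUnit) (semiconjBy_σP_ϑP hp hq)

theorem σP_mul_σP_mul_θP_mul_θP (hij : Nat.dist i.1 j.1 = 1) (hkj : Nat.dist k.1 j.1 = 1)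
    (hik : 1 < Nat.dist i.1 k.1) :
    σP k * σP j * (θP i * θP k) = σP i * σP j * (θP i * θP k) :=
  calc
    σP k * σP j * (θP i * θP k) = σP k * (σP j * θP i) * θP k := by simp only [mul_assoc]
    _ = σP k * σP i * θP j * (θP i * θP k) := by
      rw [← σP_mul_θP_mul_θP hij]; simp only [mul_assoc]
    _ = σP i * (σP k * θP j * θP k) * θP i := by
      rw [← (commute_σP_σP hik).eq, (commute_θP_θP hik).eq]; simp only [mul_assoc]
    _ = σP i * σP j * (θP k * θP i) := by
      rw [σP_mul_θP_mul_θP hkj]; simp only [mul_assoc]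
    _ = σP i * σP j * (θP i * θP k) := by rw [(commute_θP_θP hik).eq]

theorem σP_mul_σP_mul_ϑP_mul_θP_mul_θP (hj : j.1 = i.1 + 1) (hk : k.1 = i.1 + 2)
    (hp : p.1 = i.1) (hq : q.1 = i.1 + 2) :
    σP k * σP j * ϑP q * (θP i * θP k) = σP i * σP j * ϑP p * (θP i * θP k) := by
  have hij : Nat.dist i.1 j.1 = 1 := by grind [Nat.dist]
  have hkj : Nat.dist k.1 j.1 = 1 := by grind [Nat.dist]
  have hik : 1 < Nat.dist i.1 k.1 := by grind [Nat.dist]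
  have carry_left : SemiconjBy (σP k * σP j) (ϑP q) (ϑP (hi i)) :=
    (commute_σP_ϑP (by grind [hi]) (by grind [hi])).semiconjBy.mul_left
      (semiconjBy_σP_ϑP_symm hj.symm (by omega))
  have carry_right : SemiconjBy (σP i * σP j) (ϑP p) (ϑP (hi i)) :=
    (semiconjBy_σP_ϑP hp rfl).mul_left (commute_σP_ϑP (by omega) (by omega)).semiconjBy
  rw [carry_left.eq, mul_assoc, σP_mul_σP_mul_θP_mul_θP hij hkj hik, ← mul_assoc, carry_right.eq]

end PBMonoid

/-- Lemma `technicallemma` of Kudryavtseva–Mazorchuk: in `T`, for all `1 ≤ i ≤ n-3`,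
`σ_{i+2} σ_{i+1} θ_i ϑ_{i+2} ϑ_{i+3} = σ_i σ_{i+1} ϑ_i θ_i θ_{i+2} ϑ_{i+2}`. -/
theorem PB_technical_relation (n : ℕ)
    (i i₁ i₂ : Fin (n - 1)) (j₀ j₂ j₃ : Fin n)
    (h₁ : i₁.1 = i.1 + 1) (h₂ : i₂.1 = i.1 + 2)
    (hj₀ : j₀.1 = i.1) (hj₂ : j₂.1 = i.1 + 2) (hj₃ : j₃.1 = i.1 + 3) :
    σP i₂ * σP i₁ * θP i * ϑP j₂ * ϑP j₃ =
      σP i * σP i₁ * ϑP j₀ * θP i * θP i₂ * ϑP j₂ := by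
  have ϑ_pair : ϑP j₂ * θP i₂ * ϑP j₂ = ϑP j₂ * ϑP j₃ :=
    PBMonoid.ϑP_mul_θP_mul_ϑP (by omega) (by omega)
  have θϑ_comm : Commute (θP i) (ϑP j₂) := PBMonoid.commute_θP_ϑP (by omega) (by omega)
  calc σP i₂ * σP i₁ * θP i * ϑP j₂ * ϑP j₃
    _ = σP i₂ * σP i₁ * (θP i * ϑP j₂) * θP i₂ * ϑP j₂ := by
      rw [mul_assoc _ (ϑP j₂), ← ϑ_pair]; simp only [mul_assoc]
    _ = σP i₂ * σP i₁ * ϑP j₂ * (θP i * θP i₂) * ϑP j₂ := by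
      rw [θϑ_comm.eq]; simp only [mul_assoc]
    _ = σP i * σP i₁ * ϑP j₀ * (θP i * θP i₂) * ϑP j₂ := by
      rw [PBMonoid.σP_mul_σP_mul_ϑP_mul_θP_mul_θP h₁ h₂ hj₀ hj₂]
    _ = σP i * σP i₁ * ϑP j₀ * θP i * θP i₂ * ϑP j₂ := by simp only [mul_assoc]
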